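/- For every n, the reduced homology H̃_i(Δ_n; ℤ) vanishes for all i > (2n−5)/3. -/

import Mathlib

/-- The chain `L` of subsets of `{1,…,n}` (encoded as `Finset (Fin n)`) with the
sentinels `S₀ = ∅` and `S_{j+1} = univ` adjoined. -/
def withSent (n : ℕ) (L : List (Finset (Fin n))) : List (Finset (Fin n)) :=
  (∅ :: L) ++ [Finset.univ]

/-- `L` is a face of the h-complex `Δₙ` of the truncated Boolean algebra: a strictly
increasing chain of proper nonempty subsets such that, with sentinels adjoined,
every consecutive pair of blocks has `max (S_i \ S_{i-1}) > min (S_{i+1} \ S_i)`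
(expressed as: some element of the lower difference exceeds some element of the
upper difference, which is equivalent since max ≥ a and min ≤ c). -/
def IsFace (n : ℕ) (L : List (Finset (Fin n))) : Prop :=
  (withSent n L).Chain' (· ⊂ ·) ∧
  ∀ i, ∀ h : i + 2 < (withSent n L).length,
    ∃ a ∈ (withSent n L).get ⟨i + 1, by omega⟩ \ (withSent n L).get ⟨i, by omega⟩,
      ∃ c ∈ (withSent n L).get ⟨i + 2, h⟩ \ (withSent n L).get ⟨i + 1, by omega⟩, c < a

/-- The faces of `Δₙ` consisting of exactly `k` subsets (dimension `k - 1`;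
`k = 0` gives the unique empty face, present for `n ≥ 1`). -/
def HFace (n k : ℕ) : Type := {L : List (Finset (Fin n)) // IsFace n L ∧ L.length = k}

open scoped Classical in
/-- The simplicial boundary of a face with `k+1` members: the alternating sum of
the faces obtained by deleting one member (deleting a member of a face of `Δₙ`
always yields a face, so the `dite` fallback is never used). -/
noncomputable def bdryElem (n k : ℕ) (L : HFace n (k + 1)) : HFace n k →₀ ℤ :=
  ∑ i : Fin (k + 1),
    if h : IsFace n (L.1.eraseIdx i) ∧ (L.1.eraseIdx i).length = k then
      Finsupp.single (⟨L.1.eraseIdx i, h⟩ : HFace n k) ((-1 : ℤ) ^ (i : ℕ))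
    else 0

/-- The boundary map of the augmented (reduced) simplicial chain complex of
`Δₙ` over `ℤ`, from chains on faces with `k+1` members to chains on faces with
`k` members. -/
noncomputable def bdry (n k : ℕ) : (HFace n (k + 1) →₀ ℤ) →ₗ[ℤ] (HFace n k →₀ ℤ) :=
  Finsupp.lsum ℤ fun L => LinearMap.toSpanSingleton ℤ _ (bdryElem n k L)

/-- The reduced simplicial homology `H̃ᵢ(Δₙ; ℤ)`: cycles on `i`-dimensional
faces (those with `i+1` members) modulo boundaries from `(i+1)`-dimensional
faces. -/
noncomputable def ReducedHomology (n i : ℕ) :=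
  LinearMap.ker (bdry n i) ⧸
    Submodule.comap (LinearMap.ker (bdry n i)).subtype (LinearMap.range (bdry n (i + 1)))

section Comb
variable {n : ℕ}

/-- block index of `a` in the chain `F` -/
def hbt (F : Finset (Finset (Fin n))) (a : Fin n) : ℕ := (F.filter (fun S => a ∉ S)).card

/-- sorting key of the word attached to `F` -/
def hky (F : Finset (Finset (Fin n))) (a : Fin n) : ℕ := hbt F a * n + a

/-- position of `a` in the word attached to `F` -/
def hrk (F : Finset (Finset (Fin n))) (a : Fin n) : ℕ :=
  (Finset.univ.filter (fun b => hky F b < hky F a)).card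

/-- initial segment of size `t` of the word -/
def hP (F : Finset (Finset (Fin n))) (t : ℕ) : Finset (Fin n) :=
  Finset.univ.filter (fun a => hrk F a < t)

/-- chain of subsets -/
def hCh (F : Finset (Finset (Fin n))) : Prop := ∀ S ∈ F, ∀ T ∈ F, S ⊆ T ∨ T ⊆ S

/-- face condition on finsets of subsets -/
def hGd (F : Finset (Finset (Fin n))) : Prop :=
  hCh F ∧ ∀ S ∈ F, ∃ a ∈ S, ∃ c, c ∉ S ∧ c < a ∧ ∀ T ∈ F, a ∈ T → c ∉ T → T = S

theorem hky_lt (F : Finset (Finset (Fin n))) (a b : Fin n) :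
    hky F b < hky F a ↔ hbt F b < hbt F a ∨ (hbt F b = hbt F a ∧ b < a) := by
  unfold hky
  have ha := a.2
  have hb := b.2
  rcases lt_trichotomy (hbt F b) (hbt F a) with h | h | h
  · have : (hbt F b + 1) * n ≤ hbt F a * n := Nat.mul_le_mul_right _ h
    constructor
    · intro _; exact Or.inl h
    · intro _; nlinarith
  · rw [h]
    have : b < a ↔ (b : ℕ) < (a : ℕ) := Iff.rfl
    rw [this]
    constructor
    · intro h'; right; exact ⟨rfl, by omega⟩
    · rintro (h' | h') <;> omega
  · have : (hbt F a + 1) * n ≤ hbt F b * n := Nat.mul_le_mul_right _ h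
    constructor
    · intro h'; nlinarith
    · rintro (h' | h') <;> omega

theorem hky_inj (F : Finset (Finset (Fin n))) (a b : Fin n) (h : hky F a = hky F b) : a = b := by
  have h1 := hky_lt F a b
  have h2 := hky_lt F b a
  rcases lt_trichotomy a b with h3 | h3 | h3
  · by_contra; have : hbt F a = hbt F b := by omega
    have := h2.2 (Or.inr ⟨this, h3⟩); omega
  · exact h3
  · by_contra; have : hbt F a = hbt F b := by omega
    have := h1.2 (Or.inr ⟨this.symm, h3⟩); omega

theorem hrk_lt_iff (F : Finset (Finset (Fin n))) (a b : Fin n) :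
    hrk F a < hrk F b ↔ hky F a < hky F b := by
  have key : ∀ a b, hky F a < hky F b → hrk F a < hrk F b := by
    intro a b h
    apply Finset.card_lt_card
    rw [Finset.ssubset_iff_of_subset]
    · exact ⟨a, by simpa using h, by simp⟩
    · intro c hc
      simp only [Finset.mem_filter, Finset.mem_univ, true_and] at hc ⊢
      omega
  refine ⟨fun h => ?_, key a b⟩
  rcases lt_trichotomy (hky F a) (hky F b) with h1 | h1 | h1
  · exact h1
  · rw [hky_inj F a b h1] at h; omega
  · have := key b a h1; omega

theorem hrk_inj (F : Finset (Finset (Fin n))) (a b : Fin n) (h : hrk F a = hrk F b) : a = b := by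
  apply hky_inj F
  have h1 := hrk_lt_iff F a b
  have h2 := hrk_lt_iff F b a
  omega

theorem hrk_lt (F : Finset (Finset (Fin n))) (a : Fin n) : hrk F a < n := by
  have : hrk F a < (Finset.univ : Finset (Fin n)).card := by
    apply Finset.card_lt_card
    rw [Finset.ssubset_iff_of_subset (Finset.subset_univ _)]
    exact ⟨a, by simp, by simp⟩
  simpa using this

theorem hrk_image (F : Finset (Finset (Fin n))) :
    Finset.univ.image (hrk F) = Finset.range n := by
  apply Finset.eq_of_subset_of_card_le
  · intro x hx
    simp only [Finset.mem_image, Finset.mem_univ, true_and] at hx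
    obtain ⟨a, rfl⟩ := hx
    simpa using hrk_lt F a
  · rw [Finset.card_image_of_injective _ (fun a b h => hrk_inj F a b h)]
    simp

theorem hrk_surj (F : Finset (Finset (Fin n))) (t : ℕ) (h : t < n) : ∃ a, hrk F a = t := by
  have : t ∈ Finset.univ.image (hrk F) := by rw [hrk_image]; simpa using h
  simpa using this

theorem mem_hP (F : Finset (Finset (Fin n))) (t : ℕ) (a : Fin n) :
    a ∈ hP F t ↔ hrk F a < t := by simp [hP]

theorem hP_card (F : Finset (Finset (Fin n))) (t : ℕ) (h : t ≤ n) : (hP F t).card = t := by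
  have : (hP F t).image (hrk F) = Finset.range t := by
    ext x
    simp only [Finset.mem_image, mem_hP, Finset.mem_range]
    constructor
    · rintro ⟨a, ha, rfl⟩; exact ha
    · intro hx
      obtain ⟨a, ha⟩ := hrk_surj F x (by omega)
      exact ⟨a, by omega, ha⟩
  rw [← Finset.card_image_of_injective _ (fun a b h => hrk_inj F a b h), this]
  simp

theorem hP_univ (F : Finset (Finset (Fin n))) (t : ℕ) (h : n ≤ t) : hP F t = Finset.univ := by
  ext a
  have := hrk_lt F a
  simp [mem_hP]; omega

theorem hP_mono (F : Finset (Finset (Fin n))) {s t : ℕ} (h : s ≤ t) : hP F s ⊆ hP F t := by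
  intro a ha
  rw [mem_hP] at *; omega

theorem hbt_sep {F : Finset (Finset (Fin n))} {a c : Fin n} (h : hbt F a < hbt F c) :
    ∃ S ∈ F, a ∈ S ∧ c ∉ S := by
  by_contra hc
  push Not at hc
  have : hbt F c ≤ hbt F a := by
    apply Finset.card_le_card
    intro S hS
    simp only [Finset.mem_filter] at hS ⊢
    exact ⟨hS.1, fun h => hS.2 (hc S hS.1 h)⟩
  omega

theorem hbt_lt {F : Finset (Finset (Fin n))} (hF : hCh F) {S : Finset (Fin n)} (hS : S ∈ F)
    {a c : Fin n} (ha : a ∈ S) (hc : c ∉ S) : hbt F a < hbt F c := by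
  apply Finset.card_lt_card
  rw [Finset.ssubset_iff_of_subset]
  · exact ⟨S, by simp [hS, hc], by simp [ha]⟩
  · intro T hT
    simp only [Finset.mem_filter] at hT ⊢
    refine ⟨hT.1, fun h => ?_⟩
    rcases hF S hS T hT.1 with h1 | h1
    · exact hT.2 (h1 ha)
    · exact hc (h1 h)

theorem hP_of_mem {F : Finset (Finset (Fin n))} (hF : hCh F) {S : Finset (Fin n)} (hS : S ∈ F) :
    hP F S.card = S := by
  symm
  apply Finset.eq_of_subset_of_card_le
  · intro a ha
    rw [mem_hP]
    apply Finset.card_lt_card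
    rw [Finset.ssubset_iff_of_subset]
    · exact ⟨a, ha, by simp⟩
    · intro b hb
      simp only [Finset.mem_filter, Finset.mem_univ, true_and] at hb
      by_contra hbS
      have := hbt_lt hF hS ha hbS
      rw [hky_lt] at hb
      omega
  · rw [hP_card]
    simpa using Finset.card_le_univ S

theorem asc_of_not_mem {F : Finset (Finset (Fin n))} (hF : hCh F) {a b : Fin n}
    (h : hrk F b = hrk F a + 1) (hm : hP F (hrk F a + 1) ∉ F) : a < b := by
  have h1 : hky F a < hky F b := by rw [← hrk_lt_iff]; omega
  rw [hky_lt] at h1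
  rcases h1 with h1 | h1
  · exfalso
    obtain ⟨S, hS, haS, hbS⟩ := hbt_sep h1
    have h2 := hP_of_mem hF hS
    rw [← h2, mem_hP] at haS hbS
    have : S.card = hrk F a + 1 := by omega
    rw [← this, h2] at hm
    exact hm hS
  · exact h1.2

theorem desc_of_mem {F : Finset (Finset (Fin n))} (hF : hGd F) {a b : Fin n}
    (h : hrk F b = hrk F a + 1) (hm : hP F (hrk F a + 1) ∈ F) : b < a := by
  obtain ⟨x, hx, y, hy, hxy, hT⟩ := hF.2 _ hm
  have hb : hbt F a < hbt F b := hbt_lt hF.1 hm (by rw [mem_hP]; omega) (by rw [mem_hP]; omega)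
  rw [mem_hP] at hx hy
  have hxa : hky F x ≤ hky F a := by
    by_contra h'; push Not at h'; rw [← hrk_lt_iff] at h'; omega
  have hby : hky F b ≤ hky F y := by
    by_contra h'; push Not at h'; rw [← hrk_lt_iff] at h'; omega
  have e1 : hbt F x = hbt F a ∧ x ≤ a := by
    rcases hxa.lt_or_eq with h' | h'
    · rw [hky_lt] at h'
      rcases h' with h' | h'
      · exfalso
        obtain ⟨S, hS, hxS, haS⟩ := hbt_sep h'
        have h2 := hT S hS hxS (by
          rw [← hP_of_mem hF.1 hS, mem_hP] at haS ⊢; omega)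
        rw [h2, mem_hP] at haS; omega
      · exact ⟨h'.1, h'.2.le⟩
    · rw [hky_inj _ _ _ h']; simp
  have e2 : hbt F b = hbt F y ∧ b ≤ y := by
    rcases hby.lt_or_eq with h' | h'
    · rw [hky_lt] at h'
      rcases h' with h' | h'
      · exfalso
        obtain ⟨S, hS, hxS, haS⟩ := hbt_sep h'
        have h2 := hT S hS (by
          rw [← hP_of_mem hF.1 hS, mem_hP] at hxS ⊢; omega) haS
        rw [h2, mem_hP] at hxS; omega
      · exact ⟨h'.1, h'.2.le⟩
    · rw [hky_inj _ _ _ h']; simp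
  exact lt_of_le_of_lt e2.2 (lt_of_lt_of_le hxy e1.2)

theorem hCh.mono {F G : Finset (Finset (Fin n))} (hF : hCh F) (h : G ⊆ F) : hCh G :=
  fun S hS T hT => hF S (h hS) T (h hT)

theorem hGd.mono {F G : Finset (Finset (Fin n))} (hF : hGd F) (h : G ⊆ F) : hGd G := by
  refine ⟨hF.1.mono h, fun S hS => ?_⟩
  obtain ⟨a, ha, c, hc, hac, hT⟩ := hF.2 S (h hS)
  exact ⟨a, ha, c, hc, hac, fun T hTG => hT T (h hTG)⟩

theorem hflip {F G : Finset (Finset (Fin n))} (hF : hCh F) (h : G ⊆ F) {t : ℕ} {a b : Fin n}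
    (ha : a ∈ hP G t) (ha' : a ∉ hP F t) (hb : b ∈ hP F t) (hb' : b ∉ hP G t) :
    a < b ∧ (∃ S ∈ F, S ∉ G ∧ b ∈ S ∧ a ∉ S) ∧ ∀ T ∈ G, b ∈ T → a ∈ T := by
  rw [mem_hP] at ha ha' hb hb'
  have h1 : hky F b < hky F a := by rw [← hrk_lt_iff]; omega
  have h2 : hky G a < hky G b := by rw [← hrk_lt_iff]; omega
  rw [hky_lt] at h1 h2
  have hG := hF.mono h
  have h3 : ∀ T ∈ G, b ∈ T → a ∈ T := by
    intro T hT hbT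
    by_contra haT
    have := hbt_lt hG hT hbT haT
    omega
  have h4 : ¬ hbt G a < hbt G b := by
    intro h'
    obtain ⟨T, hT, haT, hbT⟩ := hbt_sep h'
    have := hbt_lt hF (h hT) haT hbT
    omega
  have h5 : a < b := by tauto
  refine ⟨h5, ?_, h3⟩
  have h6 : hbt F b < hbt F a := by
    rcases h1 with h1 | h1
    · exact h1
    · exact absurd h5 (not_lt.2 h1.2.le)
  obtain ⟨S, hS, hbS, haS⟩ := hbt_sep h6
  exact ⟨S, hS, fun hSG => haS (h3 S hSG hbS), hbS, haS⟩

theorem sum_lt_aux {P Q : Finset (Fin n)} (hc : P.card = Q.card)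
    (h : ∀ a ∈ P, a ∉ Q → ∀ b ∈ Q, b ∉ P → a < b) (hne : P ≠ Q) :
    ∑ a ∈ P, (a : ℕ) < ∑ a ∈ Q, (a : ℕ) := by
  have h1 : (P \ Q).card = (Q \ P).card := by
    rw [Finset.card_sdiff, Finset.card_sdiff, hc, Finset.inter_comm]
  rw [← Finset.sum_inter_add_sum_sdiff P Q, ← Finset.sum_inter_add_sum_sdiff Q P,
    Finset.inter_comm Q P]
  apply Nat.add_lt_add_left
  have hPQ : (P \ Q).Nonempty := by
    rw [Finset.nonempty_iff_ne_empty]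
    intro h0
    rw [h0] at h1
    have h2 : Q \ P = ∅ := by rw [← Finset.card_eq_zero, ← h1]; simp
    rw [Finset.sdiff_eq_empty_iff_subset] at h0 h2
    exact hne (h0.antisymm h2)
  obtain ⟨M, hM, hmax⟩ := Finset.exists_max_image (P \ Q) (fun a => (a : ℕ)) hPQ
  have h2 := Finset.sum_le_card_nsmul (P \ Q) (fun a => (a : ℕ)) M hmax
  have h3 := Finset.card_nsmul_le_sum (Q \ P) (fun a => (a : ℕ)) (M + 1) (by
    intro b hb
    rw [Finset.mem_sdiff] at hM hb
    exact h M hM.1 hM.2 b hb.1 hb.2)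
  have h4 := hPQ.card_pos
  simp only [smul_eq_mul] at h2 h3
  rw [← h1] at h3
  nlinarith

/-- rank function -/
def hPhi (F : Finset (Finset (Fin n))) : ℕ :=
  ∑ t ∈ (Finset.range n).filter (fun t => t % 3 ≠ 1), ∑ a ∈ hP F t, (a : ℕ)

/-- agreement of the initial segments of size not congruent to one mod three -/
def hQ (F G : Finset (Finset (Fin n))) : Prop := ∀ s, s % 3 ≠ 1 → hP F s = hP G s

theorem hQ.phi {F G : Finset (Finset (Fin n))} (h : hQ F G) : hPhi F = hPhi G := by
  unfold hPhi
  apply Finset.sum_congr rfl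
  intro t ht
  rw [h t (by simpa using (Finset.mem_filter.1 ht).2)]

theorem hPhi_le_aux {F G : Finset (Finset (Fin n))} (hF : hCh F) (h : G ⊆ F) (t : ℕ)
    (ht : t ≤ n) : hP G t = hP F t ∨ ∑ a ∈ hP G t, (a : ℕ) < ∑ a ∈ hP F t, (a : ℕ) := by
  by_cases he : hP G t = hP F t
  · exact Or.inl he
  · right
    apply sum_lt_aux _ _ he
    · rw [hP_card _ _ ht, hP_card _ _ ht]
    · intro a ha ha' b hb hb'
      exact (hflip hF h ha ha' hb hb').1

theorem hPhi_le {F G : Finset (Finset (Fin n))} (hF : hCh F) (h : G ⊆ F) : hPhi G ≤ hPhi F := by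
  apply Finset.sum_le_sum
  intro t ht
  simp only [Finset.mem_filter, Finset.mem_range] at ht
  rcases hPhi_le_aux hF h t (by omega) with h1 | h1
  · rw [h1]
  · exact h1.le

theorem hQ_of_phi {F G : Finset (Finset (Fin n))} (hF : hCh F) (h : G ⊆ F)
    (he : hPhi F ≤ hPhi G) : hQ G F := by
  intro s hs
  by_cases hsn : n ≤ s
  · rw [hP_univ _ _ hsn, hP_univ _ _ hsn]
  by_contra hne
  have : hPhi G < hPhi F := by
    apply Finset.sum_lt_sum
    · intro t ht
      simp only [Finset.mem_filter, Finset.mem_range] at ht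
      rcases hPhi_le_aux hF h t (by omega) with h1 | h1
      · rw [h1]
      · exact h1.le
    · refine ⟨s, ?_, ?_⟩
      · simp only [Finset.mem_filter, Finset.mem_range]
        exact ⟨by omega, hs⟩
      · rcases hPhi_le_aux hF h s (by omega) with h1 | h1
        · exact absurd h1 hne
        · exact h1
  omega

theorem toggle_P {F : Finset (Finset (Fin n))} (hF : hCh F) {B : Finset (Fin n)} (hB : B ∈ F)
    {t : ℕ} (hBt : B.card = t + 1) (h1 : t = 0 ∨ hP F t ∈ F)
    (h2 : n ≤ t + 2 ∨ hP F (t + 2) ∈ F) (s : ℕ) (hs : s ≠ t + 1) :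
    hP (F.erase B) s = hP F s := by
  have hsub : F.erase B ⊆ F := Finset.erase_subset _ _
  by_cases hsn : n ≤ s
  · rw [hP_univ _ _ hsn, hP_univ _ _ hsn]
  by_contra hne
  have hc : (hP (F.erase B) s).card = (hP F s).card := by
    rw [hP_card _ _ (by omega), hP_card _ _ (by omega)]
  have hBP := hP_of_mem hF hB
  rw [hBt] at hBP
  have ex1 : ∃ a, a ∈ hP (F.erase B) s ∧ a ∉ hP F s := by
    by_contra h; push Not at h
    exact hne (Finset.eq_of_subset_of_card_le h hc.ge)
  have ex2 : ∃ a, a ∈ hP F s ∧ a ∉ hP (F.erase B) s := by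
    by_contra h; push Not at h
    exact hne (Finset.eq_of_subset_of_card_le h hc.le).symm
  obtain ⟨a, ha, ha'⟩ := ex1
  obtain ⟨b, hb, hb'⟩ := ex2
  obtain ⟨-, ⟨S, hS, hSG, hbS, haS⟩, h3⟩ := hflip hF hsub ha ha' hb hb'
  have hSB : S = B := by
    by_contra h; exact hSG (Finset.mem_erase.2 ⟨h, hS⟩)
  rw [hSB, ← hBP, mem_hP] at hbS haS
  rw [mem_hP] at ha' hb
  have hbt : t ≤ hrk F b := by
    rcases h1 with h1 | h1
    · omega
    · by_contra hlt
      have := h3 _ (Finset.mem_erase.2 ⟨?_, h1⟩) (by rw [mem_hP]; omega)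
      · rw [mem_hP] at this; omega
      · intro he
        have := congrArg Finset.card he
        have hn := Finset.card_le_univ B
        rw [Fintype.card_fin] at hn
        rw [hP_card _ _ (by omega)] at this
        omega
  have hat : hrk F a < t + 2 := by
    rcases h2 with h2 | h2
    · have := hrk_lt F a; omega
    · by_contra hlt
      by_cases htn : t + 2 ≤ n
      · have := h3 _ (Finset.mem_erase.2 ⟨?_, h2⟩) (by rw [mem_hP]; omega)
        · rw [mem_hP] at this; omega
        · intro he
          have := congrArg Finset.card he
          rw [hP_card _ _ htn] at this
          omega
      · have := hrk_lt F a; omega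
  omega

end Comb
section Comb2
variable {n : ℕ}

/-- the `m`-th chunk of the word is active -/
def hAct (F : Finset (Finset (Fin n))) (m : ℕ) : Prop :=
  3 * m + 2 ≤ n ∧
  (∀ a b, a ∈ hP F (3 * m) → a ∉ hP F (3 * m - 1) → b ∈ hP F (3 * m + 2) → b ∉ hP F (3 * m) →
    b < a) ∧
  (∀ b c, b ∈ hP F (3 * m + 2) → b ∉ hP F (3 * m) → c ∈ hP F (3 * m + 3) →
    c ∉ hP F (3 * m + 2) → c < b)

theorem hQ.act {F G : Finset (Finset (Fin n))} (h : hQ F G) (m : ℕ) : hAct F m ↔ hAct G m := by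
  unfold hAct
  rw [h (3 * m) (by omega), h (3 * m + 2) (by omega), h (3 * m + 3) (by omega),
    h (3 * m - 1) (by omega)]

/-- first active chunk -/
noncomputable def hTau (F : Finset (Finset (Fin n))) : ℕ := sInf {m | hAct F m}

theorem hQ.tau {F G : Finset (Finset (Fin n))} (h : hQ F G) : hTau F = hTau G := by
  unfold hTau
  congr 1
  ext m
  exact h.act m

theorem hTau_act {F : Finset (Finset (Fin n))} (h : ∃ m, hAct F m) : hAct F (hTau F) :=
  Nat.sInf_mem (s := {m | hAct F m}) h

theorem card_pos_of_gd {F : Finset (Finset (Fin n))} (hF : hGd F) {S : Finset (Fin n)}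
    (hS : S ∈ F) : 0 < S.card ∧ S.card < n := by
  obtain ⟨a, ha, c, hc, -⟩ := hF.2 S hS
  refine ⟨Finset.card_pos.2 ⟨a, ha⟩, ?_⟩
  have := Finset.card_lt_card (s := S) (t := Finset.univ)
    ((Finset.ssubset_iff_of_subset (Finset.subset_univ _)).2 ⟨c, by simp, hc⟩)
  simpa using this

theorem act_lower {F : Finset (Finset (Fin n))} (hF : hCh F) {m : ℕ} (h : hAct F m) :
    3 * m = 0 ∨ hP F (3 * m) ∈ F := by
  by_contra hc
  push Not at hc
  have hn := h.1
  obtain ⟨a, ha⟩ := hrk_surj F (3 * m - 1) (by omega)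
  obtain ⟨b, hb⟩ := hrk_surj F (3 * m) (by omega)
  have h1 := asc_of_not_mem hF (a := a) (b := b) (by omega) (by
    rw [ha, Nat.sub_add_cancel (by omega)]; exact hc.2)
  have h2 := h.2.1 a b (by rw [mem_hP]; omega) (by rw [mem_hP]; omega) (by rw [mem_hP]; omega)
    (by rw [mem_hP]; omega)
  exact absurd h1 (not_lt.2 h2.le)

theorem act_upper {F : Finset (Finset (Fin n))} (hF : hCh F) {m : ℕ} (h : hAct F m) :
    n ≤ 3 * m + 2 ∨ hP F (3 * m + 2) ∈ F := by
  by_contra hc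
  push Not at hc
  obtain ⟨a, ha⟩ := hrk_surj F (3 * m + 1) (by omega)
  obtain ⟨b, hb⟩ := hrk_surj F (3 * m + 2) (by omega)
  have h1 := asc_of_not_mem hF (a := a) (b := b) (by omega) (by
    rw [ha]; exact hc.2)
  have h2 := h.2.2 a b (by rw [mem_hP]; omega) (by rw [mem_hP]; omega) (by rw [mem_hP]; omega)
    (by rw [mem_hP]; omega)
  exact absurd h1 (not_lt.2 h2.le)

theorem toggle_down {F : Finset (Finset (Fin n))} (hF : hCh F) {m : ℕ} (h : hAct F m)
    {B : Finset (Fin n)} (hB : B ∈ F) (hBt : B.card = 3 * m + 1) : hQ (F.erase B) F := by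
  intro s hs
  exact toggle_P hF hB hBt (act_lower hF h) (act_upper hF h) s (by omega)

theorem toggle_unique {F G : Finset (Finset (Fin n))} (hF : hGd F) (hG : hGd G) (hFG : hQ F G)
    {m : ℕ} (hm : 3 * m + 2 ≤ n)
    {B : Finset (Fin n)} (hB : B ∈ F) (hBt : B.card = 3 * m + 1)
    {C : Finset (Fin n)} (hC : C ∈ G) (hCt : C.card = 3 * m + 1) : B = C := by
  have key : ∀ {F : Finset (Finset (Fin n))} (_ : hGd F) {B : Finset (Fin n)} (_ : B ∈ F)
      (_ : B.card = 3 * m + 1), hP F (3 * m) ⊆ B ∧ ∃ b ∈ B, b ∈ hP F (3 * m + 2) ∧ b ∉ hP F (3 * m) ∧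
      (∀ x ∈ hP F (3 * m + 2), x ∉ hP F (3 * m) → x ≤ b) ∧ B = insert b (hP F (3 * m)) := by
    intro F hF B hB hBt
    have hBP := hP_of_mem hF.1 hB
    rw [hBt] at hBP
    obtain ⟨a, ha⟩ := hrk_surj F (3 * m) (by omega)
    obtain ⟨b, hb⟩ := hrk_surj F (3 * m + 1) (by omega)
    have hd := desc_of_mem hF (a := a) (b := b) (by omega) (by rw [ha, hBP]; exact hB)
    refine ⟨by rw [← hBP]; exact hP_mono _ (by omega), a, ?_, ?_, ?_, ?_, ?_⟩
    · rw [← hBP, mem_hP]; omega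
    · rw [mem_hP]; omega
    · rw [mem_hP]; omega
    · intro x hx hx'
      rw [mem_hP] at hx hx'
      rcases (show hrk F x = 3 * m ∨ hrk F x = 3 * m + 1 by omega) with h | h
      · rw [hrk_inj F x a (by omega)]
      · rw [hrk_inj F x b (by omega)]; exact hd.le
    · rw [← hBP]
      ext x
      rw [Finset.mem_insert, mem_hP, mem_hP]
      constructor
      · intro hx
        by_cases hx' : hrk F x < 3 * m
        · exact Or.inr hx'
        · left; exact hrk_inj F x a (by omega)
      · rintro (rfl | hx) <;> omega
  obtain ⟨h1, b, hb, hb1, hb2, hb3, hb4⟩ := key hF hB hBt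
  obtain ⟨h1', c, hc, hc1, hc2, hc3, hc4⟩ := key hG hC hCt
  rw [← hFG (3 * m) (by omega)] at hc2 hc3 hc4
  rw [← hFG (3 * m + 2) (by omega)] at hc1 hc3
  rw [hb4, hc4, le_antisymm (hc3 b hb1 hb2) (hb3 c hc1 hc2)]

theorem toggle_up {F : Finset (Finset (Fin n))} (hF : hGd F) {m : ℕ} (h : hAct F m)
    (hno : ∀ B ∈ F, B.card ≠ 3 * m + 1) :
    ∃ B, B ∉ F ∧ B.card = 3 * m + 1 ∧ hGd (insert B F) ∧ hQ F (insert B F) := by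
  have hn := h.1
  have hl := act_lower hF.1 h
  have hu := act_upper hF.1 h
  -- the two middle letters
  obtain ⟨p, hp⟩ := hrk_surj F (3 * m) (by omega)
  obtain ⟨q, hq⟩ := hrk_surj F (3 * m + 1) (by omega)
  have hpq : p < q := asc_of_not_mem hF.1 (by omega) (by
    intro hc
    exact hno _ hc (by rw [hP_card _ _ (by omega), hp]))
  have hmid : ∀ x, ¬ hrk F x < 3 * m → hrk F x < 3 * m + 2 → x = p ∨ x = q := by
    intro x hx hx'
    rcases (show hrk F x = 3 * m ∨ hrk F x = 3 * m + 1 by omega) with h | h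
    · left; exact hrk_inj F x p (by omega)
    · right; exact hrk_inj F x q (by omega)
  have hqA : q ∉ hP F (3 * m) := by rw [mem_hP]; omega
  let B := insert q (hP F (3 * m))
  have hBc : B.card = 3 * m + 1 := by
    show (insert q (hP F (3 * m))).card = _
    rw [Finset.card_insert_of_notMem hqA, hP_card _ _ (by omega)]
  have hmB : ∀ x, x ∈ B ↔ x = q ∨ hrk F x < 3 * m := by
    intro x
    show x ∈ insert q (hP F (3 * m)) ↔ _
    rw [Finset.mem_insert, mem_hP]
  have hBF : B ∉ F := fun hB => hno B hB hBc
  -- membership in elements of F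
  have hS : ∀ S ∈ F, ∀ x, x ∈ S ↔ hrk F x < S.card := by
    intro S hS x
    conv_lhs => rw [← hP_of_mem hF.1 hS]
    rw [mem_hP]
  have hcase : ∀ S ∈ F, S.card ≤ 3 * m ∨ 3 * m + 2 ≤ S.card := by
    intro S hS
    have := hno S hS
    omega
  have hch : hCh (insert B F) := by
    have h1 : ∀ S ∈ F, S ⊆ B ∨ B ⊆ S := by
      intro S hSF
      rcases hcase S hSF with h1 | h1
      · left
        intro x hx
        rw [hS S hSF] at hx
        rw [hmB]; right; omega
      · right
        intro x hx
        rw [hmB] at hx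
        rw [hS S hSF]
        rcases hx with rfl | hx <;> omega
    intro S hS' T hT'
    rw [Finset.mem_insert] at hS' hT'
    rcases hS' with rfl | hS' <;> rcases hT' with rfl | hT'
    · left; exact Finset.Subset.refl _
    · exact (h1 T hT').symm
    · exact h1 S hS'
    · exact hF.1 S hS' T hT'
  have hgd : hGd (insert B F) := by
    refine ⟨hch, ?_⟩
    intro S hS'
    rw [Finset.mem_insert] at hS'
    rcases hS' with rfl | hSF
    · refine ⟨q, by rw [hmB]; simp, p, ?_, hpq, ?_⟩
      · rw [hmB]; rintro (h' | h')
        · exact hpq.ne h'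
        · omega
      · intro T hT hqT hpT
        rw [Finset.mem_insert] at hT
        rcases hT with rfl | hT
        · rfl
        · rw [hS T hT] at hqT hpT; omega
    by_cases hSA : S.card = 3 * m
    · have hpos := card_pos_of_gd hF hSF
      obtain ⟨a, ha⟩ := hrk_surj F (3 * m - 1) (by omega)
      refine ⟨a, by rw [hS S hSF]; omega, q, by rw [hS S hSF]; omega, ?_, ?_⟩
      · apply h.2.1 a q <;> rw [mem_hP] <;> omega
      · intro T hT haT hqT
        rw [Finset.mem_insert] at hT
        rcases hT with rfl | hT
        · rw [hmB] at hqT; simp at hqT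
        · rw [hS T hT] at haT hqT
          have := hcase T hT
          have hTc : T.card = S.card := by omega
          rw [← hP_of_mem hF.1 hT, ← hP_of_mem hF.1 hSF, hTc]
    by_cases hSC : S.card = 3 * m + 2
    · have hpos := card_pos_of_gd hF hSF
      obtain ⟨c, hc⟩ := hrk_surj F (3 * m + 2) (by omega)
      refine ⟨p, by rw [hS S hSF]; omega, c, by rw [hS S hSF]; omega, ?_, ?_⟩
      · apply h.2.2 p c <;> rw [mem_hP] <;> omega
      · intro T hT hpT hcT
        rw [Finset.mem_insert] at hT
        rcases hT with rfl | hT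
        · rw [hmB] at hpT
          rcases hpT with h' | h'
          · exact absurd h' hpq.ne
          · omega
        · rw [hS T hT] at hpT hcT
          have := hcase T hT
          have hTc : T.card = S.card := by omega
          rw [← hP_of_mem hF.1 hT, ← hP_of_mem hF.1 hSF, hTc]
    obtain ⟨a, ha, c, hc, hca, hT⟩ := hF.2 S hSF
    refine ⟨a, ha, c, hc, hca, ?_⟩
    intro T hT' haT hcT
    rw [Finset.mem_insert] at hT'
    rcases hT' with rfl | hT'
    · exfalso
      rw [hmB] at haT hcT
      push Not at hcT
      rw [hS S hSF] at ha hc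
      rcases hcase S hSF with h1 | h1
      · -- S inside A
        have hA : hP F (3 * m) ∈ F := by
          rcases hl with hl | hl
          · have := card_pos_of_gd hF hSF; omega
          · exact hl
        have := hT _ hA (by rw [mem_hP]; omega) (by rw [mem_hP]; omega)
        apply hSA
        rw [← this, hP_card _ _ (by omega)]
      · have hC : hP F (3 * m + 2) ∈ F := by
          rcases hu with hu | hu
          · have := card_pos_of_gd hF hSF; omega
          · exact hu
        have := hT _ hC (by rw [mem_hP]; rcases haT with rfl | haT <;> omega)
          (by rw [mem_hP]; omega)
        apply hSC
        rw [← this, hP_card _ _ (by omega)]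
    · exact hT T hT' haT hcT
  refine ⟨B, hBF, hBc, hgd, ?_⟩
  have hmem : B ∈ insert B F := Finset.mem_insert_self _ _
  have hl' : 3 * m = 0 ∨ hP (insert B F) (3 * m) ∈ insert B F := by
    rcases hl with hl | hl
    · exact Or.inl hl
    · right
      have h1 := hP_of_mem hch (Finset.mem_insert_of_mem (a := hP F (3 * m)) (b := B) hl)
      rw [hP_card _ _ (by omega)] at h1
      rw [h1]; exact Finset.mem_insert_of_mem hl
  have hu' : n ≤ 3 * m + 2 ∨ hP (insert B F) (3 * m + 2) ∈ insert B F := by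
    rcases hu with hu | hu
    · exact Or.inl hu
    · right
      have h1 := hP_of_mem hch (Finset.mem_insert_of_mem (a := hP F (3 * m + 2)) (b := B) hu)
      rw [hP_card _ _ (by omega)] at h1
      rw [h1]; exact Finset.mem_insert_of_mem hu
  intro s hs
  have := toggle_P hch hmem hBc hl' hu' s (by omega)
  rwa [Finset.erase_insert hBF] at this

theorem exists_act {F : Finset (Finset (Fin n))} (hF : hGd F) {i : ℕ} (hc : F.card = i + 1)
    (h : 2 * n < 3 * i + 5) : ∃ m, hAct F m := by
  by_contra hno
  push Not at hno
  have hinj : Set.InjOn Finset.card (F : Set (Finset (Fin n))) := by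
    intro S hS T hT hST
    rw [← hP_of_mem hF.1 hS, ← hP_of_mem hF.1 hT, hST]
  have hZ : (F.image Finset.card).card = i + 1 := by
    rw [Finset.card_image_of_injOn hinj, hc]
  have hZsub : F.image Finset.card ⊆ Finset.Ioo 0 n := by
    intro x hx
    rw [Finset.mem_image] at hx
    obtain ⟨S, hS, rfl⟩ := hx
    have := card_pos_of_gd hF hS
    simpa using this
  have hgap : ∀ m, 3 * m + 2 ≤ n → ∃ s, s ∈ Finset.Ioo 0 n \ F.image Finset.card ∧ s / 3 = m := by
    intro m hm
    by_contra hall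
    push Not at hall
    have hall' : ∀ s, 0 < s → s < n → s / 3 = m → hP F s ∈ F := by
      intro s h1 h2 h3
      have : s ∈ F.image Finset.card := by
        by_contra hs
        exact hall s (Finset.mem_sdiff.2 ⟨by simp; omega, hs⟩) h3
      rw [Finset.mem_image] at this
      obtain ⟨S, hS, rfl⟩ := this
      rw [hP_of_mem hF.1 hS]; exact hS
    have hd : ∀ a b, hrk F b = hrk F a + 1 → (hrk F a + 1) / 3 = m → b < a := by
      intro a b hab h3
      apply desc_of_mem hF hab
      apply hall' _ (by omega) _ h3
      have := hrk_lt F b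
      omega
    apply hno m
    obtain ⟨p, hp⟩ := hrk_surj F (3 * m) (by omega)
    obtain ⟨q, hq⟩ := hrk_surj F (3 * m + 1) (by omega)
    have hqp := hd p q (by omega) (by omega)
    have hmid : ∀ x, ¬ hrk F x < 3 * m → hrk F x < 3 * m + 2 → x = p ∨ x = q := by
      intro x hx hx'
      rcases (show hrk F x = 3 * m ∨ hrk F x = 3 * m + 1 by omega) with h | h
      · left; exact hrk_inj F x p (by omega)
      · right; exact hrk_inj F x q (by omega)
    refine ⟨hm, ?_, ?_⟩
    · intro a b ha ha' hb hb'
      rw [mem_hP] at ha ha' hb hb'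
      have h1 := hd a p (by omega) (by omega)
      rcases hmid b hb' hb with rfl | rfl
      · exact h1
      · exact hqp.trans h1
    · intro b c hb hb' hc hc'
      rw [mem_hP] at hb hb' hc hc'
      have h1 := hd q c (by omega) (by omega)
      rcases hmid b hb' hb with rfl | rfl
      · exact h1.trans hqp
      · exact h1
  choose! g hg1 hg2 using hgap
  have hle : (Finset.range ((n + 1) / 3)).card ≤ (Finset.Ioo 0 n \ F.image Finset.card).card := by
    apply Finset.card_le_card_of_injOn g
    · intro m hm
      have : m < (n + 1) / 3 := by simpa using hm
      exact hg1 m (by omega)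
    · intro m hm m' hm' he
      have h1 : m < (n + 1) / 3 := by simpa using hm
      have h2 : m' < (n + 1) / 3 := by simpa using hm'
      rw [← hg2 m (by omega), ← hg2 m' (by omega), he]
  rw [Finset.card_sdiff_of_subset hZsub, hZ, Finset.card_range, Nat.card_Ioo] at hle
  have := Finset.card_le_card hZsub
  rw [hZ, Nat.card_Ioo] at this
  omega

end Comb2

section Link
variable {n : ℕ}

theorem withSent_length (L : List (Finset (Fin n))) : (withSent n L).length = L.length + 2 := by
  simp [withSent]

theorem withSent_succ (L : List (Finset (Fin n))) (i : ℕ) (h : i < L.length)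
    (h' : i + 1 < (withSent n L).length) : (withSent n L)[i + 1] = L[i] := by
  simp [withSent, h]

theorem mem_or_of_withSent (L : List (Finset (Fin n))) (i : ℕ) (h : i < (withSent n L).length) :
    (withSent n L)[i] = ∅ ∨ (withSent n L)[i] ∈ L ∨ (withSent n L)[i] = Finset.univ := by
  have := List.getElem_mem h
  simp only [withSent, List.cons_append, List.mem_cons, List.mem_append, List.not_mem_nil,
    or_false] at this
  exact this

theorem withSent_pairwise (L : List (Finset (Fin n))) :
    (withSent n L).Pairwise (· ⊂ ·) ↔ L.Pairwise (· ⊂ ·) ∧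
      (∀ S ∈ L, ∅ ⊂ S ∧ S ⊂ Finset.univ) ∧ (∅ : Finset (Fin n)) ⊂ Finset.univ := by
  simp only [withSent, List.cons_append, List.pairwise_cons, List.pairwise_append, List.mem_append,
    List.mem_singleton, List.not_mem_nil]
  constructor
  · rintro ⟨h1, h2, h3, h4⟩
    exact ⟨h2, fun S hS => ⟨h1 S (Or.inl hS), h4 S hS _ rfl⟩, h1 _ (Or.inr rfl)⟩
  · rintro ⟨h1, h2, h3⟩
    refine ⟨?_, h1, by simp, ?_⟩
    · rintro S (hS | rfl)
      · exact (h2 S hS).1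
      · exact h3
    · rintro S hS T rfl
      exact (h2 S hS).2

theorem isFace_iff (L : List (Finset (Fin n))) :
    IsFace n L ↔ 0 < n ∧ L.Pairwise (· ⊂ ·) ∧ hGd L.toFinset := by
  have hch : (withSent n L).Chain' (· ⊂ ·) ↔ (withSent n L).Pairwise (· ⊂ ·) :=
    List.isChain_iff_pairwise
  unfold IsFace
  rw [hch]
  have hlen := withSent_length L
  constructor
  · rintro ⟨hp, hf⟩
    have hmono : ∀ i j, (hi : i < (withSent n L).length) → (hj : j < (withSent n L).length) →
        i < j → (withSent n L)[i] ⊂ (withSent n L)[j] := by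
      intro i j hi hj hij
      exact List.pairwise_iff_getElem.1 hp i j hi hj hij
    have hmono' : ∀ i j, (hi : i < (withSent n L).length) → (hj : j < (withSent n L).length) →
        i ≤ j → (withSent n L)[i] ⊆ (withSent n L)[j] := by
      intro i j hi hj hij
      rcases hij.lt_or_eq with h | rfl
      · exact (hmono i j hi hj h).1
      · exact Finset.Subset.refl _
    rw [withSent_pairwise] at hp
    obtain ⟨h1, h2, h3⟩ := hp
    have hidx : ∀ S ∈ L, ∃ i, ∃ (hi : i < L.length), (withSent n L)[i + 1] = S := by
      intro S hS
      obtain ⟨i, hi, rfl⟩ := List.getElem_of_mem hS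
      exact ⟨i, hi, withSent_succ L i hi _⟩
    refine ⟨?_, h1, ?_, ?_⟩
    · rcases Nat.eq_zero_or_pos n with rfl | h
      · exact absurd h3 (by simp)
      · exact h
    · intro S hS T hT
      rw [List.mem_toFinset] at hS hT
      obtain ⟨i, hi, rfl⟩ := hidx S hS
      obtain ⟨j, hj, rfl⟩ := hidx T hT
      rcases le_total i j with h | h
      · left; exact hmono' _ _ _ _ (by omega)
      · right; exact hmono' _ _ _ _ (by omega)
    · intro S hS
      rw [List.mem_toFinset] at hS
      obtain ⟨i, hi, rfl⟩ := hidx S hS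
      obtain ⟨a, ha, c, hc, hca⟩ := hf i (by omega)
      simp only [List.get_eq_getElem, Finset.mem_sdiff] at ha hc
      refine ⟨a, ha.1, c, hc.2, hca, ?_⟩
      intro T hT haT hcT
      rw [List.mem_toFinset] at hT
      obtain ⟨j, hj, rfl⟩ := hidx T hT
      have : i = j := by
        rcases lt_trichotomy i j with h | h | h
        · exact absurd (hmono' (i + 2) (j + 1) (by omega) (by omega) (by omega) hc.1) hcT
        · exact h
        · exact absurd (hmono' (j + 1) i (by omega) (by omega) (by omega) haT) ha.2
      subst this; rfl
  · rintro ⟨hn, hp, hg⟩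
    have hP : (withSent n L).Pairwise (· ⊂ ·) := by
      rw [withSent_pairwise]
      refine ⟨hp, ?_, ?_⟩
      · intro S hS
        obtain ⟨a, ha, c, hc, -⟩ := hg.2 S (List.mem_toFinset.2 hS)
        refine ⟨?_, ?_⟩
        · rw [Finset.empty_ssubset]; exact ⟨a, ha⟩
        · exact (Finset.ssubset_iff_of_subset (Finset.subset_univ _)).2 ⟨c, by simp, hc⟩
      · rw [Finset.empty_ssubset]; exact ⟨⟨0, hn⟩, by simp⟩
    refine ⟨hP, ?_⟩
    have hmono : ∀ i j, (hi : i < (withSent n L).length) → (hj : j < (withSent n L).length) →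
        i < j → (withSent n L)[i] ⊂ (withSent n L)[j] := by
      intro i j hi hj hij
      exact List.pairwise_iff_getElem.1 hP i j hi hj hij
    intro i hi
    have hS : (withSent n L)[i + 1] ∈ L := by
      rw [withSent_succ L i (by omega)]; exact List.getElem_mem _
    obtain ⟨a, ha, c, hc, hca, hT⟩ := hg.2 _ (List.mem_toFinset.2 hS)
    simp only [List.get_eq_getElem, Finset.mem_sdiff]
    have m1 := hmono i (i + 1) (by omega) (by omega) (by omega)
    have m2 := hmono (i + 1) (i + 2) (by omega) (by omega) (by omega)
    refine ⟨a, ⟨ha, ?_⟩, c, ⟨?_, hc⟩, hca⟩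
    · intro ha'
      rcases mem_or_of_withSent L i (by omega) with h | h | h
      · rw [h] at ha'; simp at ha'
      · have := hT _ (List.mem_toFinset.2 h) ha' (fun h' => hc (m1.1 h'))
        exact m1.ne this
      · rw [h] at m1; exact m1.2 (Finset.subset_univ _)
    · by_contra hc'
      rcases mem_or_of_withSent L (i + 2) (by omega) with h | h | h
      · rw [h] at m2; exact m2.2 (Finset.empty_subset _)
      · have := hT _ (List.mem_toFinset.2 h) (m2.1 ha) hc'
        exact m2.ne this.symm
      · exact hc' (by rw [h]; simp)

/-- the underlying finset of a face -/
def HFace.fs {k : ℕ} (L : HFace n k) : Finset (Finset (Fin n)) := L.1.toFinset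

theorem HFace.gd {k : ℕ} (L : HFace n k) : hGd L.fs := ((isFace_iff L.1).1 L.2.1).2.2

theorem HFace.pw {k : ℕ} (L : HFace n k) : L.1.Pairwise (· ⊂ ·) := ((isFace_iff L.1).1 L.2.1).2.1

theorem HFace.pos {k : ℕ} (L : HFace n k) : 0 < n := ((isFace_iff L.1).1 L.2.1).1

theorem HFace.nodup {k : ℕ} (L : HFace n k) : L.1.Nodup := L.pw.imp (fun h => h.ne)

theorem HFace.card_fs {k : ℕ} (L : HFace n k) : L.fs.card = k := by
  unfold HFace.fs
  rw [List.toFinset_card_of_nodup L.nodup, L.2.2]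

theorem HFace.fs_inj {k : ℕ} {L M : HFace n k} (h : L.fs = M.fs) : L = M := by
  apply Subtype.ext
  have hperm : L.1.Perm M.1 := by
    rw [List.perm_ext_iff_of_nodup L.nodup M.nodup]
    intro a
    rw [← List.mem_toFinset, ← List.mem_toFinset]
    exact Finset.ext_iff.1 h a
  exact hperm.eq_of_pairwise (fun a b _ _ h1 h2 => absurd (h1.trans h2) (ssubset_irrefl _)) L.pw M.pw

theorem HFace.exists_fs {k : ℕ} (hn : 0 < n) {F : Finset (Finset (Fin n))} (hF : hGd F)
    (hk : F.card = k) : ∃ L : HFace n k, L.fs = F := by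
  let r : Finset (Fin n) → Finset (Fin n) → Prop := fun S T => S.card ≤ T.card
  have : Std.Total r := ⟨fun a b => le_total _ _⟩
  have : IsTrans _ r := ⟨fun a b c h1 h2 => le_trans (α := ℕ) h1 h2⟩
  let l := F.toList.insertionSort r
  have hperm : l.Perm F.toList := List.perm_insertionSort r _
  have hnd : l.Nodup := hperm.nodup_iff.2 F.nodup_toList
  have hmem : ∀ S, S ∈ l ↔ S ∈ F := fun S => by rw [hperm.mem_iff, Finset.mem_toList]
  have hs : l.Pairwise r := List.pairwise_insertionSort r _
  have hts : l.toFinset = F := by ext S; rw [List.mem_toFinset, hmem]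
  have hpw : l.Pairwise (· ⊂ ·) := by
    have h1 := hs.and hnd
    refine List.Pairwise.imp_of_mem ?_ h1
    intro S T hS hT h
    rw [hmem] at hS hT
    have h2 := hP_of_mem hF.1 hS
    have h3 := hP_of_mem hF.1 hT
    refine Finset.ssubset_iff_subset_ne.2 ⟨?_, h.2⟩
    rw [← h2, ← h3]
    exact hP_mono F h.1
  refine ⟨⟨l, ?_, ?_⟩, hts⟩
  · rw [isFace_iff]
    exact ⟨hn, hpw, by rw [hts]; exact hF⟩
  · rw [hperm.length_eq, Finset.length_toList, hk]

theorem erase_isFace {k : ℕ} (L : HFace n (k + 1)) (j : Fin (k + 1)) :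
    IsFace n (L.1.eraseIdx j) ∧ (L.1.eraseIdx j).length = k := by
  refine ⟨?_, ?_⟩
  · rw [isFace_iff]
    refine ⟨L.pos, L.pw.sublist (List.eraseIdx_sublist _ _), L.gd.mono ?_⟩
    intro S hS
    rw [List.mem_toFinset] at hS
    exact List.mem_toFinset.2 (List.mem_of_mem_eraseIdx hS)
  · have := j.2
    rw [List.length_eraseIdx, L.2.2]; simp; omega

/-- the `j`-th facet of a face -/
def HFace.er {k : ℕ} (L : HFace n (k + 1)) (j : Fin (k + 1)) : HFace n k :=
  ⟨L.1.eraseIdx j, erase_isFace L j⟩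

/-- the `j`-th member of a face -/
def HFace.at {k : ℕ} (L : HFace n k) (j : Fin k) : Finset (Fin n) :=
  L.1[(j : ℕ)]'(by rw [L.2.2]; exact j.2)

theorem HFace.at_mem {k : ℕ} (L : HFace n k) (j : Fin k) : L.at j ∈ L.fs := by
  unfold HFace.fs HFace.at
  rw [List.mem_toFinset]; exact List.getElem_mem _

theorem HFace.at_inj {k : ℕ} (L : HFace n k) {i j : Fin k} (h : L.at i = L.at j) : i = j := by
  unfold HFace.at at h
  exact Fin.ext ((L.nodup.getElem_inj_iff).1 h)

theorem HFace.exists_at {k : ℕ} (L : HFace n k) {S : Finset (Fin n)} (h : S ∈ L.fs) :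
    ∃ j, L.at j = S := by
  unfold HFace.fs at h
  rw [List.mem_toFinset] at h
  obtain ⟨i, hi, rfl⟩ := List.getElem_of_mem h
  exact ⟨⟨i, by rw [← L.2.2]; exact hi⟩, rfl⟩

theorem HFace.er_fs {k : ℕ} (L : HFace n (k + 1)) (j : Fin (k + 1)) :
    (L.er j).fs = L.fs.erase (L.at j) := by
  ext S
  unfold HFace.fs HFace.er HFace.at
  rw [List.mem_toFinset, Finset.mem_erase, List.mem_toFinset, List.mem_eraseIdx_iff_getElem]
  constructor
  · rintro ⟨i, hi, hne, rfl⟩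
    refine ⟨?_, List.getElem_mem _⟩
    intro h
    exact hne ((L.nodup.getElem_inj_iff).1 h)
  · rintro ⟨hne, hS⟩
    obtain ⟨i, hi, rfl⟩ := List.getElem_of_mem hS
    refine ⟨i, hi, ?_, rfl⟩
    rintro rfl
    exact hne rfl

theorem HFace.er_inj {k : ℕ} (L : HFace n (k + 1)) {i j : Fin (k + 1)} (h : L.er i = L.er j) :
    i = j := by
  apply L.at_inj
  by_contra hne
  have h1 : L.at i ∈ (L.er j).fs := by
    rw [L.er_fs, Finset.mem_erase]; exact ⟨hne, L.at_mem i⟩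
  rw [← h, L.er_fs] at h1
  simp at h1

theorem bdryElem_eq {k : ℕ} (L : HFace n (k + 1)) :
    bdryElem n k L = ∑ j : Fin (k + 1), Finsupp.single (L.er j) ((-1 : ℤ) ^ (j : ℕ)) := by
  unfold bdryElem
  apply Finset.sum_congr rfl
  intro j _
  rw [dif_pos (erase_isFace L j)]
  rfl

theorem bdry_single {k : ℕ} (L : HFace n (k + 1)) (c : ℤ) :
    bdry n k (Finsupp.single L c) = c • bdryElem n k L := by
  simp [bdry]

theorem er_er {k : ℕ} (L : HFace n (k + 2)) (i : Fin (k + 2)) (j : Fin (k + 1))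
    (h : (j : ℕ) < i) :
    (L.er i).er j = (L.er ⟨j, by omega⟩).er ⟨i - 1, by omega⟩ := by
  apply HFace.fs_inj
  rw [HFace.er_fs, HFace.er_fs, HFace.er_fs, HFace.er_fs]
  have h1 : (L.er i).at j = L.at ⟨j, by omega⟩ := by
    unfold HFace.at HFace.er
    simp only
    rw [List.getElem_eraseIdx_of_lt _ h]
  have h2 : (L.er ⟨j, by omega⟩).at ⟨i - 1, by omega⟩ = L.at i := by
    unfold HFace.at HFace.er
    simp only
    rw [List.getElem_eraseIdx_of_ge _ (by omega)]
    congr 1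
    omega
  rw [h1, h2, Finset.erase_right_comm]

theorem bdry_bdryElem {k : ℕ} (L : HFace n (k + 2)) :
    bdry n k (bdryElem n (k + 1) L) = 0 := by
  rw [bdryElem_eq, map_sum]
  simp only [bdry_single, bdryElem_eq, Finset.smul_sum]
  rw [← Finset.sum_product']
  let g : Fin (k + 2) × Fin (k + 1) → Fin (k + 2) × Fin (k + 1) := fun p =>
    if h : (p.2 : ℕ) < p.1 then (⟨p.2, by omega⟩, ⟨p.1 - 1, by omega⟩)
    else (⟨p.2 + 1, by omega⟩, ⟨p.1, by omega⟩)
  apply Finset.sum_involution (fun p _ => g p)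
  · rintro ⟨i, j⟩ -
    by_cases h : (j : ℕ) < i
    · have hg : g (i, j) = (⟨j, by omega⟩, ⟨i - 1, by omega⟩) := by simp only [g, dif_pos h]
      rw [hg]
      simp only
      rw [er_er L i j h]
      obtain ⟨i', hi'⟩ : ∃ i', (i : ℕ) = i' + 1 := ⟨i - 1, by omega⟩
      simp only [Finsupp.smul_single, ← Finsupp.single_add, hi', smul_eq_mul]
      rw [Finsupp.single_eq_zero]
      simp only [Nat.add_sub_cancel]
      ring
    · have hg : g (i, j) = (⟨j + 1, by omega⟩, ⟨i, by omega⟩) := by simp only [g, dif_neg h]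
      rw [hg]
      simp only
      rw [er_er L ⟨j + 1, by omega⟩ ⟨i, by omega⟩ (by simp; omega)]
      simp only [Finsupp.smul_single, smul_eq_mul, Nat.add_sub_cancel, Fin.eta,
        ← Finsupp.single_add]
      rw [Finsupp.single_eq_zero]
      ring
  · rintro ⟨i, j⟩ - - he
    by_cases h : (j : ℕ) < i
    · have hg : g (i, j) = (⟨j, by omega⟩, ⟨i - 1, by omega⟩) := by simp only [g, dif_pos h]
      rw [hg] at he
      have := congrArg (fun p => (p.1 : ℕ)) he
      simp only at this
      omega
    · have hg : g (i, j) = (⟨j + 1, by omega⟩, ⟨i, by omega⟩) := by simp only [g, dif_neg h]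
      rw [hg] at he
      have := congrArg (fun p => (p.1 : ℕ)) he
      simp only at this
      omega
  · intro p _; exact Finset.mem_product.2 ⟨Finset.mem_univ _, Finset.mem_univ _⟩
  · rintro ⟨i, j⟩ -
    by_cases h : (j : ℕ) < i
    · have hg : g (i, j) = (⟨j, by omega⟩, ⟨i - 1, by omega⟩) := by simp only [g, dif_pos h]
      rw [hg]
      have h' : ¬ ((i : ℕ) - 1 < j) := by omega
      simp only [g, h', dite_false]
      ext <;> simp
      omega
    · have hg : g (i, j) = (⟨j + 1, by omega⟩, ⟨i, by omega⟩) := by simp only [g, dif_neg h]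
      rw [hg]
      have h' : ((i : ℕ) < j + 1) := by omega
      simp only [g, h', dite_true]
      ext <;> simp

theorem bdry_bdry {k : ℕ} (y : HFace n (k + 2) →₀ ℤ) : bdry n k (bdry n (k + 1) y) = 0 := by
  induction y using Finsupp.induction_linear with
  | zero => simp
  | add f g hf hg => rw [map_add, map_add, hf, hg, add_zero]
  | single L c => rw [bdry_single, map_smul, bdry_bdryElem, smul_zero]

end Link

section Main
variable {n : ℕ}

/-- matched downwards -/
def HFace.isD {k : ℕ} (L : HFace n k) : Prop := ∃ B ∈ L.fs, B.card = 3 * hTau L.fs + 1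

theorem phase_one {i : ℕ} (h : 2 * n < 3 * i + 5) (N : ℕ) : ∀ L : HFace n (i + 1),
    hPhi L.fs = N → Finsupp.single L (1 : ℤ) ∈
      LinearMap.range (bdry n (i + 1)) ⊔
        Submodule.span ℤ {x | ∃ M : HFace n (i + 1), M.isD ∧ x = Finsupp.single M (1 : ℤ)} := by
  induction N using Nat.strong_induction_on with
  | _ N ih =>
    intro L hL
    by_cases hD : L.isD
    · exact Submodule.mem_sup_right (Submodule.subset_span ⟨L, hD, rfl⟩)
    have hact := hTau_act (exists_act L.gd L.card_fs h)
    have hno : ∀ B ∈ L.fs, B.card ≠ 3 * hTau L.fs + 1 := by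
      intro B hB hc
      exact hD ⟨B, hB, hc⟩
    obtain ⟨B, hBF, hBc, hgd, hQ1⟩ := toggle_up L.gd hact hno
    obtain ⟨M, hM⟩ := HFace.exists_fs (k := i + 2) L.pos hgd (by
      rw [Finset.card_insert_of_notMem hBF, L.card_fs])
    have hBM : B ∈ M.fs := by rw [hM]; exact Finset.mem_insert_self _ _
    obtain ⟨j0, hj0⟩ := M.exists_at hBM
    have hML : M.er j0 = L := by
      apply HFace.fs_inj
      rw [M.er_fs, hj0, hM, Finset.erase_insert hBF]
    have hb : bdryElem n (i + 1) M ∈ LinearMap.range (bdry n (i + 1)) :=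
      ⟨Finsupp.single M 1, by rw [bdry_single, one_smul]⟩
    rw [bdryElem_eq, ← Finset.add_sum_erase _ _ (Finset.mem_univ j0), hML] at hb
    have hrest : (∑ j ∈ Finset.univ.erase j0, Finsupp.single (M.er j) ((-1 : ℤ) ^ (j : ℕ))) ∈
        LinearMap.range (bdry n (i + 1)) ⊔
        Submodule.span ℤ {x | ∃ M : HFace n (i + 1), M.isD ∧ x = Finsupp.single M (1 : ℤ)} := by
      apply Submodule.sum_mem
      intro j hj
      have hjne : j ≠ j0 := (Finset.mem_erase.1 hj).1
      have hsm : Finsupp.single (M.er j) ((-1 : ℤ) ^ (j : ℕ)) =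
          ((-1 : ℤ) ^ (j : ℕ)) • Finsupp.single (M.er j) (1 : ℤ) := by simp
      rw [hsm]
      apply Submodule.smul_mem
      have hsub : (M.er j).fs ⊆ M.fs := by rw [M.er_fs]; exact Finset.erase_subset _ _
      have hle := hPhi_le M.gd.1 hsub
      have hphi : hPhi M.fs = N := by rw [hM, ← hQ1.phi, hL]
      rcases hle.lt_or_eq with hlt | heq
      · exact ih _ (by omega) _ rfl
      · have hq := hQ_of_phi M.gd.1 hsub heq.ge
        apply Submodule.mem_sup_right
        apply Submodule.subset_span
        refine ⟨M.er j, ⟨B, ?_, ?_⟩, rfl⟩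
        · rw [M.er_fs, Finset.mem_erase]
          refine ⟨?_, hBM⟩
          rw [← hj0]
          intro he
          exact hjne (M.at_inj he).symm
        · rw [hBc, hq.tau, hM, ← hQ1.tau]
    have h1 := Submodule.sub_mem _ (Submodule.mem_sup_left (T := Submodule.span ℤ
      {x | ∃ M : HFace n (i + 1), M.isD ∧ x = Finsupp.single M (1 : ℤ)}) hb) hrest
    rw [add_sub_cancel_right] at h1
    have h2 := Submodule.smul_mem _ ((-1 : ℤ) ^ (j0 : ℕ)) h1
    rw [Finsupp.smul_single, smul_eq_mul, ← mul_pow] at h2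
    simpa using h2

theorem span_isD {i : ℕ} {d : HFace n (i + 1) →₀ ℤ}
    (hd : d ∈ Submodule.span ℤ
      {x | ∃ M : HFace n (i + 1), M.isD ∧ x = Finsupp.single M (1 : ℤ)}) :
    ∀ L, d L ≠ 0 → L.isD := by
  classical
  induction hd using Submodule.span_induction with
  | mem x hx =>
    obtain ⟨M, hM, rfl⟩ := hx
    intro L hL
    by_cases h : M = L
    · rw [← h]; exact hM
    · exact absurd (by rw [Finsupp.single_apply, if_neg h]) hL
  | zero => intro L hL; simp at hL
  | add x y _ _ hx hy =>
    intro L hL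
    by_cases h : x L = 0
    · apply hy; intro h'; apply hL; rw [Finsupp.add_apply, h, h', add_zero]
    · exact hx L h
  | smul c x _ hx =>
    intro L hL
    apply hx
    intro h'; apply hL; rw [Finsupp.smul_apply, h', smul_zero]

theorem phase_two {i : ℕ} (h : 2 * n < 3 * i + 5) {d : HFace n (i + 1) →₀ ℤ}
    (hd : ∀ L, d L ≠ 0 → L.isD) (hz : bdry n i d = 0) : d = 0 := by
  classical
  by_contra hne
  obtain ⟨L, hL, hmax⟩ := Finset.exists_max_image d.support (fun L => hPhi L.fs)
    (Finsupp.support_nonempty_iff.2 hne)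
  rw [Finsupp.mem_support_iff] at hL
  obtain ⟨B, hB, hBc⟩ := hd L hL
  have hact := hTau_act (exists_act L.gd L.card_fs h)
  obtain ⟨j0, hj0⟩ := L.exists_at hB
  have hq : hQ (L.er j0).fs L.fs := by
    rw [L.er_fs, hj0]; exact toggle_down L.gd.1 hact hB hBc
  have hev : (bdry n i d) (L.er j0) = d L * (-1) ^ (j0 : ℕ) := by
    have hsum : bdry n i d = ∑ M ∈ d.support, d M • bdryElem n i M := by
      conv_lhs => rw [← Finsupp.sum_single d, Finsupp.sum, map_sum]
      simp only [bdry_single]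
    rw [hsum, Finsupp.finsetSum_apply]
    rw [Finset.sum_eq_single L]
    · rw [Finsupp.smul_apply, smul_eq_mul, bdryElem_eq, Finsupp.finsetSum_apply,
        Finset.sum_eq_single j0]
      · simp
      · intro j _ hj
        rw [Finsupp.single_apply, if_neg]
        intro he
        exact hj (L.er_inj he)
      · simp
    · intro M hM hML
      rw [Finsupp.smul_apply, smul_eq_mul, bdryElem_eq, Finsupp.finsetSum_apply]
      rw [Finset.sum_eq_zero, mul_zero]
      intro j _
      rw [Finsupp.single_apply, if_neg]
      intro he
      apply hML
      have hMle := hmax M hM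
      rw [Finsupp.mem_support_iff] at hM
      have hsub : (M.er j).fs ⊆ M.fs := by rw [M.er_fs]; exact Finset.erase_subset _ _
      have hq2 : hQ (M.er j).fs M.fs := by
        apply hQ_of_phi M.gd.1 hsub
        rw [he, hq.phi]; exact hMle
      have hq3 : hQ L.fs M.fs := by
        intro s hs
        rw [← hq s hs, ← hq2 s hs, he]
      obtain ⟨C, hC, hCc⟩ := hd M hM
      rw [← hq3.tau] at hCc
      have hBC := toggle_unique L.gd M.gd hq3 hact.1 hB hBc hC hCc
      have hnot : B ∉ (M.er j).fs := by
        rw [he, L.er_fs, hj0]; simp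
      have hMj : M.at j = B := by
        by_contra hx
        apply hnot
        rw [M.er_fs, Finset.mem_erase]
        exact ⟨fun h' => hx h'.symm, by rw [hBC]; exact hC⟩
      apply HFace.fs_inj
      have h1 : M.fs.erase B = L.fs.erase B := by
        rw [← hMj, ← M.er_fs, he, L.er_fs, hj0, hMj]
      rw [← Finset.insert_erase hB, ← h1, Finset.insert_erase]
      rw [hBC]; exact hC
    · intro hx
      rw [Finsupp.notMem_support_iff] at hx
      exact absurd hx hL
  rw [hz] at hev
  simp only [Finsupp.coe_zero, Pi.zero_apply] at hev
  rcases mul_eq_zero.1 hev.symm with h1 | h1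
  · exact hL h1
  · exact absurd h1 (pow_ne_zero _ (by norm_num))

end Main

/-- the reduced homology `H̃ᵢ(Δₙ; ℤ)` vanishes in every dimension
`i > (2n-5)/3`, i.e. whenever `2n < 3i + 5`. -/
theorem high_dimensional_homology_vanishes (n i : ℕ) (h : 2 * n < 3 * i + 5) :
    Subsingleton (ReducedHomology n i) := by
  unfold ReducedHomology
  rw [Submodule.Quotient.subsingleton_iff, eq_top_iff]
  rintro ⟨z, hz⟩ -
  rw [Submodule.mem_comap]
  show z ∈ LinearMap.range (bdry n (i + 1))
  rw [LinearMap.mem_ker] at hz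
  have hall : z ∈ LinearMap.range (bdry n (i + 1)) ⊔
        Submodule.span ℤ {x | ∃ M : HFace n (i + 1), M.isD ∧ x = Finsupp.single M (1 : ℤ)} := by
    rw [← Finsupp.sum_single z, Finsupp.sum]
    apply Submodule.sum_mem
    intro L _
    have hsm : Finsupp.single L (z L) = (z L) • Finsupp.single L (1 : ℤ) := by simp
    rw [hsm]
    exact Submodule.smul_mem _ _ (phase_one h _ L rfl)
  rw [Submodule.mem_sup] at hall
  obtain ⟨y, ⟨w, rfl⟩, d, hd, rfl⟩ := hall
  rw [map_add, bdry_bdry, zero_add] at hz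
  rw [phase_two h (span_isD hd) hz, add_zero]
  exact ⟨w, rfl⟩
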